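/- Let (a,b) and (c,d) be admissible pairs such that a ≠ c, b ≠ c, and let n ≥ 0 be an integer with cdq/(ab) > q^{−2n}. Set w(x) = w(x; a,b,c,d), P_n(x) = P_n(x; a,b,c,d), w*(x) = w(x; a,b,cq^{−1},dq^{−1}) and P*_{n+1}(x) = P_{n+1}(x; a,b,cq^{−1},dq^{−1}). Then for every y ∈ Λ one has Σ_{x ∈ Λ, x ◁ y} w*(x) P*_{n+1}(x) = cq/((b−c)(a−c)) · w(y) P_n(y)/|y|, the series on the left converging absolutely. -/

import Mathlib

open scoped BigOperators
open Classical

noncomputable section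

def Lambda (q zm zp : ℝ) : Set ℝ :=
  {x | ∃ m : ℤ, x = zm * q ^ m} ∪ {x | ∃ n : ℤ, x = zp * q ^ n}

/-- finite q-Pochhammer symbol (a;q)_n in ℂ. -/
def qpochC (a : ℂ) (q : ℝ) (n : ℕ) : ℂ := ∏ m ∈ Finset.range n, (1 - a * (q : ℂ) ^ m)

/-- infinite q-Pochhammer symbol (a;q)_∞ in ℂ. -/
def qpochInf (a : ℂ) (q : ℝ) : ℂ := ∏' m : ℕ, (1 - a * (q : ℂ) ^ m)

/-- theta function θ_q(u) = (u;q)_∞ (q/u;q)_∞. -/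
def thetaQ (q : ℝ) (u : ℂ) : ℂ := qpochInf u q * qpochInf ((q : ℂ) / u) q

/-- admissible pair of parameters. -/
def AdmissiblePair (q zm zp : ℝ) (a b : ℂ) : Prop :=
  a ≠ 0 ∧ b ≠ 0 ∧
    ((a.im ≠ 0 ∧ b = (starRingEnd ℂ) a) ∨
     (a.im = 0 ∧ b.im = 0 ∧
       ∃ s t : ℝ, s ∈ Lambda q zm zp ∧ t ∈ Lambda q zm zp ∧ s < t ∧
         (∀ u ∈ Lambda q zm zp, ¬ (s < u ∧ u < t)) ∧
         a⁻¹.re ∈ Set.Ioo s t ∧ b⁻¹.re ∈ Set.Ioo s t))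

/-- admissible nondegenerate quadruple: (α,β), (γ,δ) admissible pairs and γδq > αβ. -/
def AdmissibleNondeg (q zm zp : ℝ) (al be ga de : ℂ) : Prop :=
  AdmissiblePair q zm zp al be ∧ AdmissiblePair q zm zp ga de ∧
    (al * be).re < (ga * de).re * q

/-- the weight w(x; a,b,c,d) = |x| (ax;q)_∞(bx;q)_∞ / ((cx;q)_∞(dx;q)_∞). -/
def weightC (q : ℝ) (a b c d : ℂ) (x : ℝ) : ℂ :=
  (|x| : ℝ) * (qpochInf (a * x) q * qpochInf (b * x) q) /
    (qpochInf (c * x) q * qpochInf (d * x) q)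

/-- pseudo big q-Jacobi polynomial P_n(x; a,b,c,d). -/
def pbqJ (q : ℝ) (a b c d : ℂ) (n : ℕ) (x : ℂ) : ℂ :=
  ∑ k ∈ Finset.range (n + 1),
    qpochC ((q : ℂ) ^ (-(n : ℤ))) q k * qpochC (c * d * (q : ℂ) ^ ((n : ℤ) + 1) / (a * b)) q k *
        qpochC (c * x) q k /
      (qpochC (c * (q : ℂ) / b) q k * qpochC (c * (q : ℂ) / a) q k * qpochC (q : ℂ) q k) *
      (q : ℂ) ^ k

/-- leading coefficient k_n(a,b,c,d) of P_n. -/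
def kCoeff (q : ℝ) (a b c d : ℂ) (n : ℕ) : ℂ :=
  c ^ n * qpochC (c * d * (q : ℂ) ^ ((n : ℤ) + 1) / (a * b)) q n /
    (qpochC (c * (q : ℂ) / b) q n * qpochC (c * (q : ℂ) / a) q n)

/-- the q-hypergeometric series ₂φ₁(A,B;C;q,Z). -/
def phi21 (q : ℝ) (A B C Z : ℂ) : ℂ :=
  ∑' m : ℕ, qpochC A q m * qpochC B q m / (qpochC C q m * qpochC (q : ℂ) q m) * Z ^ m

/-- principal branch square root. -/
def csqrt (z : ℂ) : ℂ := z ^ (1 / 2 : ℂ)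


/-- the relation x ◁ y: either y > 0 and x < y, or y < 0 and x ≤ y. -/
def triLT (x y : ℝ) : Prop := (0 < y ∧ x < y) ∨ (y < 0 ∧ x ≤ y)

/-!
Write `w x = |x| * v x`. The function `F = K * v * P_n`, with `K = c q / ((b - c) (a - c))`, is a
`q`-antiderivative of `v* * P*_{n+1}`, where `v* = w* / |x|`: this is the backward shift relation
for the polynomials. It is proved by comparing coefficients, because the relevant `q`-difference
operator is bidiagonal from the basis `(c z; q)_k` to the basis `(c z / q; q)_k`.

The sum over `x ◁ y` therefore telescopes along the rays of the lattice to `F y`. The two boundary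
terms at `0` cancel since `F` is continuous there. The boundary term at `-∞` vanishes: `v` behaves
under `z ↦ z / q` like a geometric sequence of ratio `a b / (c d)`, and the lower bound on
`c d q / (a b)` makes this decay faster than `P_n` grows. Together with admissibility the same bound
rules out `c * q ^ k = a` and `c * q ^ k = b` for `k ≤ n`, the zeros of the denominators in
`K` and `P_n`.
-/

open Filter Topology Bornology Asymptotics

section Lattice

variable {q zm zp : ℝ}

lemma zm_mem_Lambda : zm ∈ Lambda q zm zp := Or.inl ⟨0, by simp⟩

lemma mul_zpow_mem_Lambda (hq0 : 0 < q) {x : ℝ} (hx : x ∈ Lambda q zm zp) (j : ℤ) :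
    x * q ^ j ∈ Lambda q zm zp := by
  rcases hx with ⟨m, rfl⟩ | ⟨m, rfl⟩
  · exact Or.inl ⟨m + j, by rw [mul_assoc, zpow_add₀ hq0.ne']⟩
  · exact Or.inr ⟨m + j, by rw [mul_assoc, zpow_add₀ hq0.ne']⟩

lemma mul_pow_mem_Lambda (hq0 : 0 < q) {x : ℝ} (hx : x ∈ Lambda q zm zp) (j : ℕ) :
    x * q ^ j ∈ Lambda q zm zp := by
  simpa using mul_zpow_mem_Lambda hq0 hx j

lemma div_pow_mem_Lambda (hq0 : 0 < q) {x : ℝ} (hx : x ∈ Lambda q zm zp) (j : ℕ) :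
    x / q ^ j ∈ Lambda q zm zp := by
  simpa [div_eq_mul_inv] using mul_zpow_mem_Lambda hq0 hx (-j)

lemma ne_zero_of_mem_Lambda (hq0 : 0 < q) (hzm : zm < 0) (hzp : 0 < zp) {x : ℝ}
    (hx : x ∈ Lambda q zm zp) : x ≠ 0 := by
  rcases hx with ⟨m, rfl⟩ | ⟨m, rfl⟩
  · exact mul_ne_zero hzm.ne (zpow_pos hq0 m).ne'
  · exact mul_ne_zero hzp.ne' (zpow_pos hq0 m).ne'

lemma exists_div_eq_zpow_of_div_pos (hq0 : 0 < q) (hzm : zm < 0) (hzp : 0 < zp) {x z : ℝ}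
    (hx : x ∈ Lambda q zm zp) (hz : z ∈ Lambda q zm zp) (hxz : 0 < x / z) :
    ∃ m : ℤ, x / z = q ^ m := by
  rcases hx with ⟨m, rfl⟩ | ⟨m, rfl⟩ <;> rcases hz with ⟨j, rfl⟩ | ⟨j, rfl⟩
  · exact ⟨m - j, by rw [mul_div_mul_left _ _ hzm.ne, zpow_sub₀ hq0.ne']⟩
  · exact absurd hxz (div_neg_of_neg_of_pos (mul_neg_of_neg_of_pos hzm (zpow_pos hq0 m))
      (mul_pos hzp (zpow_pos hq0 j))).not_gt
  · exact absurd hxz (div_neg_of_pos_of_neg (mul_pos hzp (zpow_pos hq0 m))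
      (mul_neg_of_neg_of_pos hzm (zpow_pos hq0 j))).not_gt
  · exact ⟨m - j, by rw [mul_div_mul_left _ _ hzp.ne', zpow_sub₀ hq0.ne']⟩

/-- The part `z, z / q, z / q², …` of the `q`-lattice through `z`, running away from `0`. -/
def outerRay (q z : ℝ) : Set ℝ := Set.range fun i : ℕ => z / q ^ i

/-- The part `z * q, z * q², …` of the `q`-lattice through `z`, running towards `0`; the point `z`
itself belongs to `outerRay q z` only. -/
def innerRay (q z : ℝ) : Set ℝ := Set.range fun i : ℕ => z * q ^ (i + 1)

lemma outerRay_subset_Lambda (hq0 : 0 < q) {z : ℝ} (hz : z ∈ Lambda q zm zp) :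
    outerRay q z ⊆ Lambda q zm zp := by
  rintro _ ⟨i, rfl⟩
  exact div_pow_mem_Lambda hq0 hz i

lemma innerRay_subset_Lambda (hq0 : 0 < q) {z : ℝ} (hz : z ∈ Lambda q zm zp) :
    innerRay q z ⊆ Lambda q zm zp := by
  rintro _ ⟨i, rfl⟩
  exact mul_pow_mem_Lambda hq0 hz (i + 1)

lemma neg_of_mem_outerRay (hq0 : 0 < q) {x z : ℝ} (hz : z < 0) (hx : x ∈ outerRay q z) :
    x < 0 := by
  obtain ⟨i, rfl⟩ := hx
  exact div_neg_of_neg_of_pos hz (pow_pos hq0 i)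

lemma neg_of_mem_innerRay (hq0 : 0 < q) {x z : ℝ} (hz : z < 0) (hx : x ∈ innerRay q z) :
    x < 0 := by
  obtain ⟨i, rfl⟩ := hx
  exact mul_neg_of_neg_of_pos hz (pow_pos hq0 (i + 1))

lemma pos_of_mem_innerRay (hq0 : 0 < q) {x z : ℝ} (hz : 0 < z) (hx : x ∈ innerRay q z) :
    0 < x := by
  obtain ⟨i, rfl⟩ := hx
  exact mul_pos hz (pow_pos hq0 (i + 1))

lemma mem_outerRay_iff (hq0 : 0 < q) (hq1 : q < 1) (hzm : zm < 0) (hzp : 0 < zp) {x z : ℝ}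
    (hz : z ∈ Lambda q zm zp) : x ∈ outerRay q z ↔ x ∈ Lambda q zm zp ∧ 1 ≤ x / z := by
  have hz0 : z ≠ 0 := ne_zero_of_mem_Lambda hq0 hzm hzp hz
  constructor
  · intro hx
    refine ⟨outerRay_subset_Lambda hq0 hz hx, ?_⟩
    obtain ⟨i, rfl⟩ := hx
    rw [div_right_comm, div_self hz0]
    exact (one_le_div (pow_pos hq0 i)).2 (pow_le_one₀ hq0.le hq1.le)
  · rintro ⟨hx, hxz⟩
    obtain ⟨m, hm⟩ := exists_div_eq_zpow_of_div_pos hq0 hzm hzp hx hz (by linarith)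
    rw [hm, one_le_zpow_iff_right_of_lt_one₀ hq0 hq1] at hxz
    obtain ⟨i, rfl⟩ := Int.exists_eq_neg_ofNat hxz
    refine ⟨i, ?_⟩
    rw [zpow_neg, zpow_natCast] at hm
    exact (div_eq_inv_mul z _).trans ((div_eq_iff hz0).1 hm).symm

lemma mem_innerRay_iff (hq0 : 0 < q) (hq1 : q < 1) (hzm : zm < 0) (hzp : 0 < zp) {x z : ℝ}
    (hz : z ∈ Lambda q zm zp) :
    x ∈ innerRay q z ↔ x ∈ Lambda q zm zp ∧ 0 < x / z ∧ x / z < 1 := by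
  have hz0 : z ≠ 0 := ne_zero_of_mem_Lambda hq0 hzm hzp hz
  constructor
  · intro hx
    refine ⟨innerRay_subset_Lambda hq0 hz hx, ?_⟩
    obtain ⟨i, rfl⟩ := hx
    rw [mul_div_cancel_left₀ _ hz0]
    exact ⟨pow_pos hq0 _, pow_lt_one₀ hq0.le hq1 i.succ_ne_zero⟩
  · rintro ⟨hx, hxz0, hxz1⟩
    obtain ⟨m, hm⟩ := exists_div_eq_zpow_of_div_pos hq0 hzm hzp hx hz hxz0
    rw [hm, zpow_lt_one_iff_right_of_lt_one₀ hq0 hq1] at hxz1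
    obtain ⟨i, rfl⟩ := Int.eq_succ_of_zero_lt hxz1
    have hm' : x / z = q ^ (i + 1) := by exact_mod_cast hm
    exact ⟨i, (mul_comm z _).trans ((div_eq_iff hz0).1 hm').symm⟩

lemma setOf_triLT_of_neg (hq0 : 0 < q) (hq1 : q < 1) (hzm : zm < 0) (hzp : 0 < zp) {y : ℝ}
    (hy : y ∈ Lambda q zm zp) (hy0 : y < 0) :
    {x | x ∈ Lambda q zm zp ∧ triLT x y} = outerRay q y := by
  ext x
  simp [mem_outerRay_iff hq0 hq1 hzm hzp hy, one_le_div_of_neg hy0, triLT, hy0, hy0.not_gt]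

lemma setOf_triLT_of_pos (hq0 : 0 < q) (hq1 : q < 1) (hzm : zm < 0) (hzp : 0 < zp) {y : ℝ}
    (hy : y ∈ Lambda q zm zp) (hy0 : 0 < y) :
    {x | x ∈ Lambda q zm zp ∧ triLT x y} = outerRay q zm ∪ innerRay q zm ∪ innerRay q y := by
  ext x
  simp only [Set.mem_ofPred_eq, Set.mem_union, mem_outerRay_iff hq0 hq1 hzm hzp zm_mem_Lambda,
    mem_innerRay_iff hq0 hq1 hzm hzp zm_mem_Lambda, mem_innerRay_iff hq0 hq1 hzm hzp hy,
    ← and_or_left, and_congr_right_iff]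
  intro hx
  have hx0 : x ≠ 0 := ne_zero_of_mem_Lambda hq0 hzm hzp hx
  rw [one_le_div_of_neg hzm, div_lt_one_of_neg hzm, div_lt_one hy0, div_pos_iff_of_pos_right hy0,
    div_pos_iff]
  grind [triLT]

lemma disjoint_outerRay_innerRay (hq0 : 0 < q) (hq1 : q < 1) (hzm : zm < 0) (hzp : 0 < zp) {z : ℝ}
    (hz : z ∈ Lambda q zm zp) : Disjoint (outerRay q z) (innerRay q z) := by
  refine Set.disjoint_left.2 fun x hx hx' => ?_
  rw [mem_outerRay_iff hq0 hq1 hzm hzp hz] at hx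
  rw [mem_innerRay_iff hq0 hq1 hzm hzp hz] at hx'
  exact hx.2.not_gt hx'.2.2

lemma disjoint_union_rays_innerRay (hq0 : 0 < q) {y z : ℝ} (hz : z < 0) (hy : 0 < y) :
    Disjoint (outerRay q z ∪ innerRay q z) (innerRay q y) := by
  refine Set.disjoint_left.2 fun x hx hx' => ?_
  have hxneg : x < 0 := hx.elim (neg_of_mem_outerRay hq0 hz) (neg_of_mem_innerRay hq0 hz)
  exact hxneg.not_gt (pos_of_mem_innerRay hq0 hy hx')

end Lattice

section Jackson

lemma hasSum_sub_succ_of_tendsto {E : Type*} [NormedAddCommGroup E] {f : ℕ → E} {l : E}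
    (hf : Tendsto f atTop (𝓝 l)) (hs : Summable fun i => f i - f (i + 1)) :
    HasSum (fun i => f i - f (i + 1)) (f 0 - l) := by
  rw [hs.hasSum_iff_tendsto_nat]
  simp only [Finset.sum_range_sub']
  exact hf.const_sub (f 0)

variable {E : Type*} [NormedAddCommGroup E] [NormedSpace ℝ E] {q : ℝ} {F g : ℝ → E} {S : Set ℝ}

/-- `F` is a `q`-antiderivative of `g` on `S`: its backward `q`-difference quotient there is `g`.
The quotient is cleared of its denominator `x`, and the usual factor `1 / q - 1` is absorbed
into `g`. -/
def IsQAntideriv (q : ℝ) (F g : ℝ → E) (S : Set ℝ) : Prop :=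
  ∀ x ∈ S, F (x / q) - F x = x • g x

lemma IsQAntideriv.mono {T : Set ℝ} (h : IsQAntideriv q F g T) (hST : S ⊆ T) :
    IsQAntideriv q F g S :=
  fun x hx => h x (hST hx)

lemma IsQAntideriv.hasSum_outerRay (hq0 : 0 < q) (hq1 : q < 1) {z : ℝ} (hz : z ≠ 0)
    (h : IsQAntideriv q F g (outerRay q z)) (hF : Summable fun i : ℕ => F (z / q ^ i)) :
    HasSum (fun x : outerRay q z => (x : ℝ) • g x) (-F z) := by
  have hinj : Function.Injective fun i : ℕ => z / q ^ i := fun i j hij =>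
    pow_right_injective₀ hq0 hq1.ne (by simpa [div_eq_mul_inv, hz] using hij)
  have hstep (i : ℕ) : (z / q ^ i) • g (z / q ^ i) = -(F (z / q ^ i) - F (z / q ^ (i + 1))) := by
    rw [← h _ ⟨i, rfl⟩, neg_sub, div_div, ← pow_succ]
  refine (hinj.hasSum_range_iff (f := fun x => x • g x)).2 ?_
  rw [Function.comp_def, funext hstep]
  simpa using (hasSum_sub_succ_of_tendsto hF.tendsto_atTop_zero
    (hF.sub ((summable_nat_add_iff 1).2 hF))).neg

lemma tendsto_mul_pow_nhds_zero (hq0 : 0 < q) (hq1 : q < 1) (z : ℝ) :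
    Tendsto (fun i : ℕ => z * q ^ i) atTop (𝓝 0) := by
  simpa using (tendsto_pow_atTop_nhds_zero_of_lt_one hq0.le hq1).const_mul z

lemma summable_mul_pow_smul [CompleteSpace E] (hq0 : 0 < q) (hq1 : q < 1) (hg : ContinuousAt g 0)
    (z : ℝ) : Summable fun i : ℕ => (z * q ^ i) • g (z * q ^ i) := by
  have hbdd : (fun i : ℕ => g (z * q ^ i)) =O[atTop] fun _ => (1 : ℝ) :=
    (hg.tendsto.comp (tendsto_mul_pow_nhds_zero hq0 hq1 z)).isBigO_one ℝ
  refine summable_of_isBigO_nat ((summable_geometric_of_lt_one hq0.le hq1).mul_left z) ?_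
  simpa using (isBigO_refl (fun i : ℕ => z * q ^ i) atTop).smul hbdd

lemma IsQAntideriv.hasSum_innerRay [CompleteSpace E] (hq0 : 0 < q) (hq1 : q < 1) {z : ℝ}
    (hz : z ≠ 0) (h : IsQAntideriv q F g (innerRay q z)) (hF : ContinuousAt F 0)
    (hg : ContinuousAt g 0) :
    HasSum (fun x : innerRay q z => (x : ℝ) • g x) (F z - F 0) := by
  have hinj : Function.Injective fun i : ℕ => z * q ^ (i + 1) := fun i j hij =>
    Nat.succ_injective (pow_right_injective₀ hq0 hq1.ne (mul_left_cancel₀ hz hij))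
  have hstep (i : ℕ) : (z * q ^ (i + 1)) • g (z * q ^ (i + 1)) =
      F (z * q ^ i) - F (z * q ^ (i + 1)) := by
    rw [← h (z * q ^ (i + 1)) ⟨i, rfl⟩, pow_succ, ← mul_assoc, mul_div_cancel_right₀ _ hq0.ne']
  have hs := (summable_nat_add_iff 1).2 (summable_mul_pow_smul hq0 hq1 hg z)
  refine (hinj.hasSum_range_iff (f := fun x => x • g x)).2 ?_
  rw [summable_congr hstep] at hs
  rw [Function.comp_def, funext hstep]
  simpa using hasSum_sub_succ_of_tendsto
    (hF.tendsto.comp (tendsto_mul_pow_nhds_zero hq0 hq1 z)) hs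

variable {zm zp : ℝ}

lemma hasSum_abs_smul_of_neg {a : E} (hS : ∀ x ∈ S, x < 0)
    (h : HasSum (fun x : S => (x : ℝ) • g x) a) : HasSum (fun x : S => |(x : ℝ)| • g x) (-a) := by
  simpa only [abs_of_neg (hS _ (Subtype.prop _)), neg_smul] using h.neg

lemma hasSum_abs_smul_of_pos {a : E} (hS : ∀ x ∈ S, 0 < x)
    (h : HasSum (fun x : S => (x : ℝ) • g x) a) : HasSum (fun x : S => |(x : ℝ)| • g x) a := by
  simpa only [abs_of_pos (hS _ (Subtype.prop _))] using h

theorem IsQAntideriv.hasSum_triLT [CompleteSpace E] (hq0 : 0 < q) (hq1 : q < 1) (hzm : zm < 0)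
    (hzp : 0 < zp) (h : IsQAntideriv q F g (Lambda q zm zp)) (hF : ContinuousAt F 0)
    (hg : ContinuousAt g 0)
    (hsum : ∀ x ∈ Lambda q zm zp, x < 0 → Summable fun i : ℕ => F (x / q ^ i))
    {y : ℝ} (hy : y ∈ Lambda q zm zp) :
    HasSum (fun x : {x : ↥(Lambda q zm zp) // triLT (x : ℝ) y} => |(x : ℝ)| • g x) (F y) := by
  set f : ℝ → E := fun x => |x| • g x
  have outer {z : ℝ} (hz : z ∈ Lambda q zm zp) (hz0 : z < 0) :
      HasSum (fun x : outerRay q z => f x) (F z) := by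
    have h' := (h.mono (outerRay_subset_Lambda hq0 hz)).hasSum_outerRay hq0 hq1 hz0.ne
      (hsum z hz hz0)
    simpa only [neg_neg] using hasSum_abs_smul_of_neg (fun _ => neg_of_mem_outerRay hq0 hz0) h'
  have inner {z : ℝ} (hz : z ∈ Lambda q zm zp) :
      HasSum (fun x : innerRay q z => (x : ℝ) • g x) (F z - F 0) :=
    (h.mono (innerRay_subset_Lambda hq0 hz)).hasSum_innerRay hq0 hq1
      (ne_zero_of_mem_Lambda hq0 hzm hzp hz) hF hg
  suffices key : HasSum (fun x : {x | x ∈ Lambda q zm zp ∧ triLT x y} => f x) (F y) from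
    (Equiv.subtypeSubtypeEquivSubtypeInter _ _).hasSum_iff.2 key
  rcases (ne_zero_of_mem_Lambda hq0 hzm hzp hy).lt_or_gt with hy0 | hy0
  · rw [setOf_triLT_of_neg hq0 hq1 hzm hzp hy hy0]
    exact outer hy hy0
  · rw [setOf_triLT_of_pos hq0 hq1 hzm hzp hy hy0]
    -- The boundary terms `-F 0` and `F 0` of the two inner rays cancel.
    have hneg := hasSum_abs_smul_of_neg (fun _ => neg_of_mem_innerRay hq0 hzm) (inner zm_mem_Lambda)
    have hpos := hasSum_abs_smul_of_pos (fun _ => pos_of_mem_innerRay hq0 hy0) (inner hy)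
    have hsplit := ((outer zm_mem_Lambda hzm).add_disjoint (f := f)
      (disjoint_outerRay_innerRay hq0 hq1 hzm hzp zm_mem_Lambda) hneg).add_disjoint (f := f)
      (disjoint_union_rays_innerRay hq0 hzm hy0) hpos
    simpa [Function.comp_def] using hsplit

end Jackson

section Admissible

variable {q zm zp : ℝ} {a b c d : ℂ}

lemma exists_mem_Lambda_lt_of_pos (hq0 : 0 < q) (hq1 : q < 1) (hzp : 0 < zp) {x : ℝ} (hx : 0 < x) :
    ∃ p ∈ Lambda q zm zp, p < x ∧ q * x ≤ p := by
  obtain ⟨m, hlt, hle⟩ := exists_mem_Ioc_zpow (div_pos hx hzp) ((one_lt_inv₀ hq0).2 hq1)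
  refine ⟨zp * q⁻¹ ^ m, Or.inr ⟨-m, by rw [inv_zpow']⟩, (lt_div_iff₀' hzp).1 hlt, ?_⟩
  rw [zpow_add_one₀ (inv_ne_zero hq0.ne'), ← div_eq_mul_inv, div_le_div_iff₀ hzp hq0] at hle
  linarith

lemma exists_mem_Lambda_lt_of_neg (hq0 : 0 < q) (hq1 : q < 1) (hzm : zm < 0) {x : ℝ} (hx : x < 0) :
    ∃ p ∈ Lambda q zm zp, p < x ∧ x ≤ q * p := by
  obtain ⟨m, hle, hlt⟩ := exists_mem_Ico_zpow (div_pos_of_neg_of_neg hx hzm)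
    ((one_lt_inv₀ hq0).2 hq1)
  refine ⟨zm * q⁻¹ ^ (m + 1), Or.inl ⟨-(m + 1), by rw [inv_zpow']⟩, (div_lt_iff_of_neg' hzm).1 hlt,
    ?_⟩
  rw [zpow_add_one₀ (inv_ne_zero hq0.ne'), mul_left_comm, mul_left_comm q, mul_inv_cancel₀ hq0.ne',
    mul_one]
  exact (le_div_iff_of_neg' hzm).1 hle

/-- `x` and `y` are not separated by any point of `S`. A common point of `S` just below them makes
`x` and `y` comparable in size, see `SameGap.mul_div_le_one`. -/
def SameGap (S : Set ℝ) (x y : ℝ) : Prop := ∀ p ∈ S, p < x ↔ p < y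

lemma SameGap.trans {S : Set ℝ} {x y z : ℝ} (hxy : SameGap S x y) (hyz : SameGap S y z) :
    SameGap S x z :=
  fun p hp => (hxy p hp).trans (hyz p hp)

lemma SameGap.div_pow (hq0 : 0 < q) {x y : ℝ} (h : SameGap (Lambda q zm zp) x y) (k : ℕ) :
    SameGap (Lambda q zm zp) (x / q ^ k) (y / q ^ k) := fun p hp => by
  rw [lt_div_iff₀ (pow_pos hq0 k), lt_div_iff₀ (pow_pos hq0 k)]
  exact h _ (mul_pow_mem_Lambda hq0 hp k)

lemma SameGap.mul_div_le_one (hq0 : 0 < q) (hq1 : q < 1) (hzm : zm < 0) (hzp : 0 < zp) {x y : ℝ}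
    (h : SameGap (Lambda q zm zp) x y) : q * (x / y) ≤ 1 := by
  rw [← mul_div_assoc]
  rcases lt_trichotomy y 0 with hy | rfl | hy
  · obtain ⟨p, hp, hpy, hyp⟩ := exists_mem_Lambda_lt_of_neg (zp := zp) hq0 hq1 hzm hy
    have hpx : p < x := (h p hp).2 hpy
    exact (div_le_one_of_neg hy).2 (hyp.trans (by gcongr))
  · simp
  · rcases le_or_gt x 0 with hx | hx
    · exact (div_nonpos_of_nonpos_of_nonneg (mul_nonpos_of_nonneg_of_nonpos hq0.le hx) hy.le).trans
        zero_le_one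
    · obtain ⟨p, hp, hpx, hxp⟩ := exists_mem_Lambda_lt_of_pos (zm := zm) hq0 hq1 hzp hx
      exact (div_le_one hy).2 (hxp.trans ((h p hp).1 hpx).le)

namespace AdmissiblePair

lemma symm (h : AdmissiblePair q zm zp a b) : AdmissiblePair q zm zp b a := by
  obtain ⟨ha, hb, ⟨ha_im, rfl⟩ | ⟨ha_im, hb_im, s, t, hs, ht, hst, hgap, has, hbs⟩⟩ := h
  · exact ⟨hb, ha, Or.inl ⟨by simpa using ha_im, by simp⟩⟩
  · exact ⟨hb, ha, Or.inr ⟨hb_im, ha_im, s, t, hs, ht, hst, hgap, hbs, has⟩⟩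

lemma mul_ne_one (h : AdmissiblePair q zm zp a b) {x : ℝ} (hx : x ∈ Lambda q zm zp) :
    a * x ≠ 1 := fun hax => by
  have ha : a = (x : ℂ)⁻¹ := eq_inv_of_mul_eq_one_left hax
  obtain ⟨-, -, ⟨ha_im, -⟩ | ⟨-, -, s, t, -, -, -, hgap, has, -⟩⟩ := h
  · exact ha_im (by rw [ha, ← Complex.ofReal_inv, Complex.ofReal_im])
  · exact hgap x hx (by simpa [ha] using has)

lemma eq_conj (h : AdmissiblePair q zm zp a b) (ha_im : a.im ≠ 0) : b = (starRingEnd ℂ) a := by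
  obtain ⟨-, -, ⟨-, hb⟩ | ⟨ha_im', -⟩⟩ := h
  · exact hb
  · exact absurd ha_im' ha_im

lemma im_eq_zero (h : AdmissiblePair q zm zp a b) (ha_im : a.im = 0) : b.im = 0 := by
  obtain ⟨-, -, ⟨ha_im', -⟩ | ⟨-, hb_im, -⟩⟩ := h
  · exact absurd ha_im ha_im'
  · exact hb_im

lemma sameGap (h : AdmissiblePair q zm zp a b) (ha_im : a.im = 0) :
    SameGap (Lambda q zm zp) a⁻¹.re b⁻¹.re := fun p hp => by
  obtain ⟨-, -, ⟨ha_im', -⟩ | ⟨-, -, s, t, -, -, -, hgap, has, hbs⟩⟩ := h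
  · exact absurd ha_im ha_im'
  · have hp_gap := hgap p hp
    grind

/-- Non-real pairs are conjugate, so `d * q ^ k = a`; for real pairs `1 / a` and `1 / (d * q ^ k)`
share a gap of the lattice with `1 / b = 1 / (c * q ^ k)`. -/
lemma re_mul_div_le_one (hq0 : 0 < q) (hq1 : q < 1) (hzm : zm < 0) (hzp : 0 < zp)
    (hab : AdmissiblePair q zm zp a b) (hcd : AdmissiblePair q zm zp c d) {k : ℕ}
    (hcb : c * (q : ℂ) ^ k = b) : (q * (d * (q : ℂ) ^ k / a)).re ≤ 1 := by
  have him : b.im = c.im * q ^ k := by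
    rw [← hcb, ← Complex.ofReal_pow, Complex.im_mul_ofReal]
  by_cases hc_im : c.im = 0
  · have hb_im : b.im = 0 := by rw [him, hc_im, zero_mul]
    have ha_im : a.im = 0 := hab.symm.im_eq_zero hb_im
    have hd_im : d.im = 0 := hcd.im_eq_zero hc_im
    have hgap : SameGap (Lambda q zm zp) a⁻¹.re (d⁻¹.re / q ^ k) := by
      have hb_inv : b⁻¹.re = c⁻¹.re / q ^ k := by
        rw [← hcb, mul_inv, ← div_eq_mul_inv, ← Complex.ofReal_pow, Complex.div_ofReal_re]
      have hgap_ab := hab.sameGap ha_im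
      rw [hb_inv] at hgap_ab
      exact hgap_ab.trans ((hcd.sameGap hc_im).div_pow hq0 k)
    lift a to ℝ using ha_im
    lift d to ℝ using hd_im
    have hval : (q * (d * (q : ℂ) ^ k / a)).re = q * (a⁻¹ / (d⁻¹ / q ^ k)) := by
      norm_cast
      simp only [div_eq_mul_inv, mul_inv, inv_inv]
      ring
    rw [hval]
    exact_mod_cast hgap.mul_div_le_one hq0 hq1 hzm hzp
  · have hb_im : b.im ≠ 0 := by
      rw [him]
      exact mul_ne_zero hc_im (pow_pos hq0 k).ne'
    have hda : d * (q : ℂ) ^ k = a := by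
      rw [hab.symm.eq_conj hb_im, hcd.eq_conj hc_im, ← hcb]
      simp
    rw [hda, div_self hab.1, mul_one, Complex.ofReal_re]
    exact hq1.le

lemma re_div_le_of_mul_pow_eq (hq0 : 0 < q) (hq1 : q < 1) (hzm : zm < 0) (hzp : 0 < zp)
    (hab : AdmissiblePair q zm zp a b) (hcd : AdmissiblePair q zm zp c d) {k : ℕ}
    (hcb : c * (q : ℂ) ^ k = b) : (c * d * q / (a * b)).re ≤ q ^ (-(2 * k : ℤ)) := by
  have hqc : (q : ℂ) ≠ 0 := by exact_mod_cast hq0.ne'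
  have hval : c * d * q / (a * b) = (q ^ (-(2 * k : ℤ)) : ℝ) * (q * (d * (q : ℂ) ^ k / a)) := by
    have ha := hab.1
    have hc := hcd.1
    push_cast
    rw [← hcb, zpow_neg, mul_comm 2, zpow_mul, zpow_natCast]
    field_simp
  rw [hval, Complex.re_ofReal_mul]
  exact mul_le_of_le_one_right (zpow_pos hq0 _).le (hab.re_mul_div_le_one hq0 hq1 hzm hzp hcd hcb)

lemma mul_pow_ne_of_lt_re (hq0 : 0 < q) (hq1 : q < 1) (hzm : zm < 0) (hzp : 0 < zp)
    (hab : AdmissiblePair q zm zp a b) (hcd : AdmissiblePair q zm zp c d) {n k : ℕ}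
    (hn : q ^ (-(2 * n : ℤ)) < (c * d * q / (a * b)).re) (hk : k ≤ n) : c * (q : ℂ) ^ k ≠ b :=
  fun hcb => by
  have hle := hab.re_div_le_of_mul_pow_eq hq0 hq1 hzm hzp hcd hcb
  have hmono : q ^ (-(2 * k : ℤ)) ≤ q ^ (-(2 * n : ℤ)) :=
    zpow_le_zpow_right_of_le_one₀ hq0 hq1.le (by omega)
  exact hn.not_ge (hle.trans hmono)

end AdmissiblePair

lemma norm_mul_lt_of_lt_re (hq0 : 0 < q) (hq1 : q < 1) {n : ℕ}
    (hn : q ^ (-(2 * n : ℤ)) < (c * d * q / (a * b)).re) : ‖a * b‖ < q ^ n * ‖c * d‖ := by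
  have hpos : 0 < q ^ (-(2 * n : ℤ)) := zpow_pos hq0 _
  have hab : 0 < ‖a * b‖ := by
    refine norm_pos_iff.2 fun hab => ?_
    rw [hab, div_zero, Complex.zero_re] at hn
    exact hn.not_gt hpos
  have hlt : q ^ (-(2 * n : ℤ)) < ‖c * d‖ * q / ‖a * b‖ := by
    simpa [abs_of_pos hq0] using hn.trans_le (Complex.re_le_norm _)
  rw [lt_div_iff₀ hab, zpow_neg, inv_mul_lt_iff₀ (zpow_pos hq0 _)] at hlt
  have hpow : q ^ (2 * n : ℤ) * q ≤ q ^ n := by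
    have : q ^ (2 * n : ℤ) * q = q ^ (2 * n + 1) := by norm_cast
    rw [this]
    exact pow_le_pow_of_le_one hq0.le hq1.le (by omega)
  calc ‖a * b‖ < q ^ (2 * n : ℤ) * (‖c * d‖ * q) := hlt
    _ = q ^ (2 * n : ℤ) * q * ‖c * d‖ := by ring
    _ ≤ q ^ n * ‖c * d‖ := by gcongr

end Admissible

section QPochhammer

variable {q : ℝ}

lemma qpochC_zero (z : ℂ) : qpochC z q 0 = 1 := Finset.prod_range_zero _

lemma qpochC_succ (z : ℂ) (k : ℕ) : qpochC z q (k + 1) = qpochC z q k * (1 - z * (q : ℂ) ^ k) :=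
  Finset.prod_range_succ _ _

lemma qpochC_succ' (z : ℂ) (k : ℕ) : qpochC z q (k + 1) = (1 - z) * qpochC (z * q) q k := by
  simp [qpochC, Finset.prod_range_succ', pow_succ', mul_assoc, mul_comm]

lemma qpochInf_zero : qpochInf 0 q = 1 := by simp [qpochInf]

lemma summable_norm_mul_pow (hq0 : 0 < q) (hq1 : q < 1) (z : ℂ) :
    Summable fun m : ℕ => ‖-(z * (q : ℂ) ^ m)‖ := by
  simpa [abs_of_pos hq0] using (summable_geometric_of_lt_one hq0.le hq1).mul_left ‖z‖

lemma qpochInf_eq_one_sub_mul (hq0 : 0 < q) (hq1 : q < 1) (z : ℂ) :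
    qpochInf z q = (1 - z) * qpochInf (z * q) q := by
  have hmul : Multipliable fun m : ℕ => 1 - z * q * (q : ℂ) ^ m := by
    simpa only [sub_eq_add_neg] using
      multipliable_one_add_of_summable (summable_norm_mul_pow hq0 hq1 (z * q))
  have htail (m : ℕ) : 1 - z * (q : ℂ) ^ (m + 1) = 1 - z * q * (q : ℂ) ^ m := by ring
  rw [qpochInf, tprod_eq_zero_mul' (by simpa only [htail] using hmul)]
  simp only [htail, pow_zero, mul_one, qpochInf]

lemma continuous_qpochInf (hq0 : 0 < q) (hq1 : q < 1) : Continuous fun z => qpochInf z q := by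
  refine continuous_iff_continuousAt.2 fun z => ?_
  simp only [ContinuousAt, qpochInf, sub_eq_add_neg]
  refine tendsto_tprod_one_add_of_dominated_convergence
    (bound := fun m => (‖z‖ + 1) * q ^ m)
    ((summable_geometric_of_lt_one hq0.le hq1).mul_left _) (fun m => ?_) ?_
  · exact (Continuous.neg (by fun_prop)).tendsto z
  · filter_upwards [Metric.ball_mem_nhds z one_pos] with w hw m
    have hwz : ‖w‖ ≤ ‖z‖ + 1 := by
      linarith [norm_le_norm_add_norm_sub' w z, mem_ball_iff_norm.1 hw]
    rw [norm_neg, norm_mul, norm_pow, Complex.norm_real, Real.norm_of_nonneg hq0.le]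
    gcongr

end QPochhammer

section Weight

variable {q : ℝ} {a b c d : ℂ}

/-- The weight with its factor `|x|` removed, which makes it a function of a complex variable that
is continuous at the accumulation point `0` of the lattice. -/
def reducedWeight (q : ℝ) (a b c d z : ℂ) : ℂ :=
  qpochInf (a * z) q * qpochInf (b * z) q / (qpochInf (c * z) q * qpochInf (d * z) q)

lemma weightC_eq_abs_mul (x : ℝ) :
    weightC q a b c d x = (|x| : ℝ) * reducedWeight q a b c d x :=
  mul_div_assoc _ _ _

lemma continuousAt_reducedWeight_zero (hq0 : 0 < q) (hq1 : q < 1) :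
    ContinuousAt (reducedWeight q a b c d) 0 := by
  have hcont (e : ℂ) : Continuous fun z => qpochInf (e * z) q :=
    (continuous_qpochInf hq0 hq1).comp (continuous_const_mul e)
  exact ((hcont a).mul (hcont b)).continuousAt.div ((hcont c).mul (hcont d)).continuousAt
    (by simp [qpochInf_zero])

lemma qpochInf_mul_div (hq0 : 0 < q) (hq1 : q < 1) (e z : ℂ) :
    qpochInf (e * (z / q)) q = (1 - e * (z / q)) * qpochInf (e * z) q := by
  have hqc : (q : ℂ) ≠ 0 := by exact_mod_cast hq0.ne'
  rw [qpochInf_eq_one_sub_mul hq0 hq1, mul_assoc, div_mul_cancel₀ _ hqc]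

lemma reducedWeight_div (hq0 : 0 < q) (hq1 : q < 1) (z : ℂ) :
    reducedWeight q a b c d (z / q) =
      (1 - a * (z / q)) * (1 - b * (z / q)) * reducedWeight q a b (c / q) (d / q) z := by
  have hshift (e : ℂ) : e * (z / q) = e / q * z := by ring
  simp only [reducedWeight]
  rw [qpochInf_mul_div hq0 hq1, qpochInf_mul_div hq0 hq1, hshift c, hshift d]
  ring

lemma reducedWeight_eq_mul (hq0 : 0 < q) (hq1 : q < 1) {z : ℂ} (hc : c * (z / q) ≠ 1)
    (hd : d * (z / q) ≠ 1) :
    reducedWeight q a b c d z =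
      (1 - c * (z / q)) * (1 - d * (z / q)) * reducedWeight q a b (c / q) (d / q) z := by
  have hshift (e : ℂ) : e / q * z = e * (z / q) := by ring
  have hc' : 1 - c * (z / q) ≠ 0 := sub_ne_zero.2 hc.symm
  have hd' : 1 - d * (z / q) ≠ 0 := sub_ne_zero.2 hd.symm
  simp only [reducedWeight]
  rw [hshift c, hshift d, qpochInf_mul_div hq0 hq1, qpochInf_mul_div hq0 hq1,
    mul_mul_mul_comm (1 - c * (z / q)), ← mul_div_assoc, mul_div_mul_left _ _ (mul_ne_zero hc' hd')]

lemma tendsto_one_sub_mul_div_cobounded (hc : c ≠ 0) :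
    Tendsto (fun z => (1 - a * z) / (1 - c * z)) (cobounded ℂ) (𝓝 (a / c)) := by
  have hlim (e : ℂ) : Tendsto (fun z : ℂ => z⁻¹ - e) (cobounded ℂ) (𝓝 (-e)) := by
    simpa using (tendsto_inv₀_cobounded (α := ℂ)).sub_const e
  have h := (hlim a).div (hlim c) (neg_ne_zero.2 hc)
  rw [neg_div_neg_eq] at h
  refine h.congr' ?_
  filter_upwards [eventually_ne_cobounded (0 : ℂ)] with z hz
  have hfactor (e : ℂ) : 1 - e * z = (z⁻¹ - e) * z := by rw [sub_mul, inv_mul_cancel₀ hz]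
  rw [hfactor, hfactor, mul_div_mul_right _ _ hz]
  rfl

lemma eventually_norm_reducedWeight_div_le (hq0 : 0 < q) (hq1 : q < 1) {r : ℝ}
    (hr : ‖a * b‖ < r * ‖c * d‖) :
    ∀ᶠ z in cobounded ℂ, ‖reducedWeight q a b c d (z / q)‖ ≤ r * ‖reducedWeight q a b c d z‖ := by
  have hqc : (q : ℂ) ≠ 0 := by exact_mod_cast hq0.ne'
  have hcd : c * d ≠ 0 := fun h => by
    rw [h, norm_zero, mul_zero] at hr
    exact hr.not_ge (norm_nonneg _)
  have hc := left_ne_zero_of_mul hcd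
  have hd := right_ne_zero_of_mul hcd
  have hdiv : Tendsto (fun z : ℂ => z / q) (cobounded ℂ) (cobounded ℂ) := by
    simpa only [div_eq_mul_inv] using tendsto_mul_right_cobounded (inv_ne_zero hqc)
  have hlim : Tendsto (fun z => ‖(1 - a * z) / (1 - c * z) * ((1 - b * z) / (1 - d * z))‖)
      (cobounded ℂ) (𝓝 ‖a / c * (b / d)‖) :=
    ((tendsto_one_sub_mul_div_cobounded hc).mul (tendsto_one_sub_mul_div_cobounded hd)).norm
  have hlt : ‖a / c * (b / d)‖ < r := by
    rwa [div_mul_div_comm, norm_div, div_lt_iff₀ (norm_pos_iff.2 hcd)]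
  filter_upwards [(hlim.comp hdiv).eventually_le_const hlt,
    hdiv.eventually (eventually_ne_cobounded c⁻¹),
    hdiv.eventually (eventually_ne_cobounded d⁻¹)] with z hz hzc hzd
  have hcz : c * (z / q) ≠ 1 := fun h => hzc (eq_inv_of_mul_eq_one_right h)
  have hdz : d * (z / q) ≠ 1 := fun h => hzd (eq_inv_of_mul_eq_one_right h)
  have hstep : reducedWeight q a b c d (z / q) = (1 - a * (z / q)) / (1 - c * (z / q)) *
      ((1 - b * (z / q)) / (1 - d * (z / q))) * reducedWeight q a b c d z := by
    rw [reducedWeight_div hq0 hq1, reducedWeight_eq_mul hq0 hq1 hcz hdz, div_mul_div_comm,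
      ← mul_assoc,
      div_mul_cancel₀ _ (mul_ne_zero (sub_ne_zero.2 hcz.symm) (sub_ne_zero.2 hdz.symm))]
  rw [hstep, norm_mul]
  exact mul_le_mul_of_nonneg_right hz (norm_nonneg _)

lemma tendsto_div_pow_cobounded (hq0 : 0 < q) (hq1 : q < 1) {z : ℂ} (hz : z ≠ 0) :
    Tendsto (fun i : ℕ => z / (q : ℂ) ^ i) atTop (cobounded ℂ) := by
  refine tendsto_norm_atTop_iff_cobounded.1 ?_
  simpa [div_eq_mul_inv, abs_of_pos hq0] using
    (tendsto_pow_atTop_atTop_of_one_lt ((one_lt_inv₀ hq0).2 hq1)).const_mul_atTop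
      (norm_pos_iff.2 hz)

lemma summable_reducedWeight_mul_pow (hq0 : 0 < q) (hq1 : q < 1) {n : ℕ}
    (hn : ‖a * b‖ < q ^ n * ‖c * d‖) {z : ℂ} (hz : z ≠ 0) :
    Summable fun i : ℕ => reducedWeight q a b c d (z / q ^ i) * (z / q ^ i) ^ n := by
  have hcd : 0 < ‖c * d‖ :=
    pos_of_mul_pos_right ((norm_nonneg _).trans_lt hn) (pow_pos hq0 n).le
  obtain ⟨r, har, hrn⟩ := exists_between ((div_lt_iff₀ hcd).2 hn)
  refine summable_of_ratio_norm_eventually_le ((div_lt_one (pow_pos hq0 n)).2 hrn) ?_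
  filter_upwards [(tendsto_div_pow_cobounded hq0 hq1 hz).eventually
    (eventually_norm_reducedWeight_div_le hq0 hq1 ((div_lt_iff₀ hcd).1 har))] with i hi
  rw [div_div, ← pow_succ] at hi
  have hpow : ‖(z / (q : ℂ) ^ (i + 1)) ^ n‖ = ‖(z / (q : ℂ) ^ i) ^ n‖ / q ^ n := by
    simp [pow_succ, ← div_div, div_pow, abs_of_pos hq0]
  rw [norm_mul, norm_mul, hpow]
  refine (mul_le_mul_of_nonneg_right hi (by positivity)).trans_eq ?_
  ring

end Weight

section BackwardShift

variable {q : ℝ} {a b c d : ℂ}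

/-- The coefficient of `(c * x; q)_k` in the pseudo big `q`-Jacobi polynomial `P_n`, so that the
shifted factorials form the basis in which the polynomials are expanded. -/
def pbqJCoeff (q : ℝ) (a b c d : ℂ) (n k : ℕ) : ℂ :=
  qpochC ((q : ℂ) ^ n)⁻¹ q k * qpochC (c * d * (q : ℂ) ^ (n + 1) / (a * b)) q k /
    (qpochC (c * q / b) q k * qpochC (c * q / a) q k * qpochC q q k) * (q : ℂ) ^ k

lemma pbqJ_eq_sum (n : ℕ) (x : ℂ) :
    pbqJ q a b c d n x =
      ∑ k ∈ Finset.range (n + 1), pbqJCoeff q a b c d n k * qpochC (c * x) q k := by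
  refine Finset.sum_congr rfl fun k _ => ?_
  have hexp : (q : ℂ) ^ ((n : ℤ) + 1) = (q : ℂ) ^ (n + 1) := by norm_cast
  rw [hexp, zpow_neg, zpow_natCast, pbqJCoeff]
  ring

lemma pbqJCoeff_zero (n : ℕ) : pbqJCoeff q a b c d n 0 = 1 := by simp [pbqJCoeff, qpochC_zero]

lemma pbqJCoeff_succ (n k : ℕ) :
    pbqJCoeff q a b c d n (k + 1) = pbqJCoeff q a b c d n k *
      ((1 - ((q : ℂ) ^ n)⁻¹ * q ^ k) * (1 - c * d * q ^ (n + 1) / (a * b) * q ^ k) * q /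
        ((1 - c * q / b * q ^ k) * (1 - c * q / a * q ^ k) * (1 - (q : ℂ) ^ (k + 1)))) := by
  simp only [pbqJCoeff, qpochC_succ, div_eq_mul_inv, mul_inv, pow_succ']
  ring

lemma pbqJCoeff_succ_self (hq0 : 0 < q) (n : ℕ) : pbqJCoeff q a b c d n (n + 1) = 0 := by
  have hqn : (q : ℂ) ^ n ≠ 0 := pow_ne_zero _ (by exact_mod_cast hq0.ne')
  rw [pbqJCoeff_succ, inv_mul_cancel₀ hqn]
  simp

lemma pbqJCoeff_shift_succ (hq0 : 0 < q) (n k : ℕ) :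
    pbqJCoeff q a b (c / q) (d / q) (n + 1) (k + 1) = pbqJCoeff q a b c d n k *
      ((1 - ((q : ℂ) ^ (n + 1))⁻¹) * (1 - c * d * q ^ n / (a * b)) * q /
        ((1 - c / b) * (1 - c / a) * (1 - (q : ℂ) ^ (k + 1)))) := by
  have hqc : (q : ℂ) ≠ 0 := by exact_mod_cast hq0.ne'
  have hlow : ((q : ℂ) ^ (n + 1))⁻¹ * q = ((q : ℂ) ^ n)⁻¹ := by
    rw [pow_succ, mul_inv, inv_mul_cancel_right₀ hqc]
  have hcd : c / q * (d / q) * (q : ℂ) ^ (n + 1 + 1) / (a * b) = c * d * q ^ n / (a * b) := by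
    rw [pow_succ, pow_succ]
    field_simp
  have hcd' : c * d * (q : ℂ) ^ n / (a * b) * q = c * d * q ^ (n + 1) / (a * b) := by ring
  have hc (e : ℂ) : c / e * q = c * q / e := by ring
  simp only [pbqJCoeff]
  rw [qpochC_succ (q : ℂ), ← pow_succ']
  simp only [qpochC_succ', div_mul_cancel₀ c hqc, hlow, hcd, hcd', hc, pow_succ' (q : ℂ) k]
  simp only [div_eq_mul_inv, mul_inv]
  ring

/-- The diagonal entries of the operator
`f ↦ ((1 - a z / q) (1 - b z / q) f (z / q) - (1 - c z / q) (1 - d z / q) f z) / z`,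
which is bidiagonal from the basis `(c z; q)_k` to the basis `(c z / q; q)_k`. -/
def shiftDiag (q : ℝ) (a b c : ℂ) (k : ℕ) : ℂ :=
  (a - c * q ^ k) * (b - c * q ^ k) / (c * q ^ (k + 1))

/-- The negatives of the off-diagonal entries of the operator described at `shiftDiag`. -/
def shiftOffDiag (q : ℝ) (a b c d : ℂ) (k : ℕ) : ℂ :=
  (a * b - c * d * q ^ k) / (c * q ^ (k + 1))

lemma shift_qpochC (hq0 : 0 < q) (hc : c ≠ 0) (z : ℂ) (k : ℕ) :
    (1 - a * (z / q)) * (1 - b * (z / q)) * qpochC (c * (z / q)) q k -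
        (1 - c * (z / q)) * (1 - d * (z / q)) * qpochC (c * z) q k =
      z * (shiftDiag q a b c k * qpochC (c * (z / q)) q k -
        shiftOffDiag q a b c d k * qpochC (c * (z / q)) q (k + 1)) := by
  have hqc : (q : ℂ) ≠ 0 := by exact_mod_cast hq0.ne'
  have htail : (1 - c * (z / q)) * qpochC (c * z) q k =
      qpochC (c * (z / q)) q k * (1 - c * (z / q) * q ^ k) := by
    rw [← qpochC_succ, qpochC_succ', mul_assoc c, div_mul_cancel₀ z hqc]
  have hfactor : (1 - a * (z / q)) * (1 - b * (z / q)) -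
      (1 - c * (z / q) * q ^ k) * (1 - d * (z / q)) =
      z * (shiftDiag q a b c k - shiftOffDiag q a b c d k * (1 - c * (z / q) * q ^ k)) := by
    simp only [shiftDiag, shiftOffDiag, pow_succ]
    field_simp
    ring
  rw [qpochC_succ]
  linear_combination qpochC (c * (z / q)) q k * hfactor - (1 - d * (z / q)) * htail

lemma one_sub_pow_ne_zero (hq0 : 0 < q) (hq1 : q < 1) (k : ℕ) : 1 - (q : ℂ) ^ (k + 1) ≠ 0 :=
  sub_ne_zero.2 (by exact_mod_cast (pow_lt_one₀ hq0.le hq1 k.succ_ne_zero).ne')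

lemma pbqJCoeff_succ_mul_shiftDiag (hq0 : 0 < q) (ha : a ≠ 0) (hb : b ≠ 0)
    (hc : c ≠ 0) {n : ℕ} (hca : ∀ k ≤ n, c * (q : ℂ) ^ k ≠ a) (hcb : ∀ k ≤ n, c * (q : ℂ) ^ k ≠ b)
    {k : ℕ} (hk : k ≤ n) :
    pbqJCoeff q a b c d n (k + 1) * shiftDiag q a b c (k + 1) = pbqJCoeff q a b c d n k *
      ((1 - ((q : ℂ) ^ n)⁻¹ * q ^ k) * (a * b - c * d * q ^ (n + 1) * q ^ k) /
        ((1 - (q : ℂ) ^ (k + 1)) * (c * q ^ (k + 1)))) := by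
  have hqc : (q : ℂ) ≠ 0 := by exact_mod_cast hq0.ne'
  -- For `k = n` both sides vanish, and `c * q ^ (n + 1)` is allowed to be `a` or `b`.
  rcases hk.eq_or_lt with rfl | hk
  · rw [pbqJCoeff_succ_self hq0, inv_mul_cancel₀ (pow_ne_zero _ hqc)]
    simp
  · have ha' : a - c * q ^ (k + 1) ≠ 0 := sub_ne_zero.2 (hca _ hk).symm
    have hb' : b - c * q ^ (k + 1) ≠ 0 := sub_ne_zero.2 (hcb _ hk).symm
    have hfactor {e : ℂ} (he : e ≠ 0) : 1 - c * q / e * q ^ k = (e - c * q ^ (k + 1)) / e := by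
      field_simp
      ring
    rw [pbqJCoeff_succ, hfactor ha, hfactor hb, shiftDiag,
      div_mul_eq_mul_div _ (a * b), one_sub_div (mul_ne_zero ha hb)]
    generalize a - c * (q : ℂ) ^ (k + 1) = A at *
    generalize b - c * (q : ℂ) ^ (k + 1) = B at *
    generalize 1 - (q : ℂ) ^ (k + 1) = C
    rw [pow_succ _ (k + 1)]
    field_simp

lemma pbqJCoeff_shift_succ_eq (hq0 : 0 < q) (hq1 : q < 1) (ha : a ≠ 0) (hb : b ≠ 0)
    (hc : c ≠ 0) {n : ℕ} (hca : ∀ k ≤ n, c * (q : ℂ) ^ k ≠ a) (hcb : ∀ k ≤ n, c * (q : ℂ) ^ k ≠ b)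
    {k : ℕ} (hk : k ≤ n) :
    pbqJCoeff q a b (c / q) (d / q) (n + 1) (k + 1) = c * q / ((b - c) * (a - c)) *
      (pbqJCoeff q a b c d n (k + 1) * shiftDiag q a b c (k + 1) -
        pbqJCoeff q a b c d n k * shiftOffDiag q a b c d k) := by
  have hqc : (q : ℂ) ≠ 0 := by exact_mod_cast hq0.ne'
  have hac : a - c ≠ 0 := sub_ne_zero.2 (by simpa using (hca 0 n.zero_le).symm)
  have hbc : b - c ≠ 0 := sub_ne_zero.2 (by simpa using (hcb 0 n.zero_le).symm)
  have hqk := one_sub_pow_ne_zero hq0 hq1 k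
  rw [pbqJCoeff_succ_mul_shiftDiag hq0 ha hb hc hca hcb hk, ← mul_sub, pbqJCoeff_shift_succ hq0,
    mul_left_comm, shiftOffDiag, one_sub_div ha, one_sub_div hb]
  congr 1
  generalize hC : 1 - (q : ℂ) ^ (k + 1) = C at *
  field_simp
  rw [← hC]
  ring

lemma sum_range_mul_sub_mul_succ {R : Type*} [Ring R] (u v φ : ℕ → R) {n : ℕ} (hu : u (n + 1) = 0) :
    ∑ k ∈ Finset.range (n + 1), (u k * φ k - v k * φ (k + 1)) =
      ∑ k ∈ Finset.range (n + 1), (u (k + 1) - v k) * φ (k + 1) + u 0 * φ 0 := by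
  have hshift : ∑ k ∈ Finset.range (n + 1), u k * φ k =
      ∑ k ∈ Finset.range (n + 1), u (k + 1) * φ (k + 1) + u 0 * φ 0 := by
    rw [← Finset.sum_range_succ' fun k => u k * φ k, Finset.sum_range_succ _ (n + 1), hu, zero_mul,
      add_zero]
  simp only [sub_mul, Finset.sum_sub_distrib, hshift]
  abel

lemma shift_pbqJ (hq0 : 0 < q) (hc : c ≠ 0) (n : ℕ) (z : ℂ) :
    (1 - a * (z / q)) * (1 - b * (z / q)) * pbqJ q a b c d n (z / q) -
        (1 - c * (z / q)) * (1 - d * (z / q)) * pbqJ q a b c d n z =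
      z * ∑ k ∈ Finset.range (n + 1),
        (pbqJCoeff q a b c d n k * shiftDiag q a b c k * qpochC (c * (z / q)) q k -
          pbqJCoeff q a b c d n k * shiftOffDiag q a b c d k * qpochC (c * (z / q)) q (k + 1)) := by
  simp only [pbqJ_eq_sum, Finset.mul_sum, ← Finset.sum_sub_distrib]
  refine Finset.sum_congr rfl fun k _ => ?_
  linear_combination
    pbqJCoeff q a b c d n k * shift_qpochC (a := a) (b := b) (d := d) hq0 hc z k

theorem pbqJ_backward_shift (hq0 : 0 < q) (hq1 : q < 1) (ha : a ≠ 0) (hb : b ≠ 0)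
    (hc : c ≠ 0) {n : ℕ} (hca : ∀ k ≤ n, c * (q : ℂ) ^ k ≠ a) (hcb : ∀ k ≤ n, c * (q : ℂ) ^ k ≠ b)
    (z : ℂ) :
    c * q / ((b - c) * (a - c)) *
        ((1 - a * (z / q)) * (1 - b * (z / q)) * pbqJ q a b c d n (z / q) -
          (1 - c * (z / q)) * (1 - d * (z / q)) * pbqJ q a b c d n z) =
      z * pbqJ q a b (c / q) (d / q) (n + 1) z := by
  have hqc : (q : ℂ) ≠ 0 := by exact_mod_cast hq0.ne'
  have hac : a - c ≠ 0 := sub_ne_zero.2 (by simpa using (hca 0 n.zero_le).symm)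
  have hbc : b - c ≠ 0 := sub_ne_zero.2 (by simpa using (hcb 0 n.zero_le).symm)
  set K := c * (q : ℂ) / ((b - c) * (a - c)) with hK
  set A := pbqJCoeff q a b c d n
  set B := pbqJCoeff q a b (c / q) (d / q) (n + 1)
  set φ : ℕ → ℂ := qpochC (c * (z / q)) q
  have hzero : K * (A 0 * shiftDiag q a b c 0) = B 0 := by
    simp only [A, B, pbqJCoeff_zero, shiftDiag, hK, pow_zero, zero_add, pow_one, mul_one]
    field_simp
  have hsucc (k : ℕ) (hk : k ∈ Finset.range (n + 1)) :
      K * (A (k + 1) * shiftDiag q a b c (k + 1) - A k * shiftOffDiag q a b c d k) = B (k + 1) :=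
    (pbqJCoeff_shift_succ_eq hq0 hq1 ha hb hc hca hcb (Finset.mem_range_succ_iff.1 hk)).symm
  have hexpand : pbqJ q a b (c / q) (d / q) (n + 1) z =
      ∑ k ∈ Finset.range (n + 1), B (k + 1) * φ (k + 1) + B 0 * φ 0 := by
    rw [pbqJ_eq_sum, Finset.sum_range_succ', div_mul_eq_mul_div, mul_div_assoc]
  rw [shift_pbqJ hq0 hc, sum_range_mul_sub_mul_succ (fun k => A k * shiftDiag q a b c k) _ _
    (by simp [A, pbqJCoeff_succ_self hq0]), mul_left_comm, mul_add, Finset.mul_sum, ← mul_assoc K,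
    hzero, hexpand]
  congr 2
  exact Finset.sum_congr rfl fun k hk => by rw [← mul_assoc, hsucc k hk]

end BackwardShift

section Summation

variable {q zm zp : ℝ} {a b c d : ℂ}

lemma continuous_pbqJ (n : ℕ) : Continuous (pbqJ q a b c d n) := by
  unfold pbqJ qpochC
  fun_prop

lemma isBigO_qpochC_mul (k : ℕ) :
    (fun z => qpochC (c * z) q k) =O[cobounded ℂ] fun z => z ^ k := by
  have hlin (m : ℕ) : (fun z : ℂ => 1 - c * z * (q : ℂ) ^ m) =O[cobounded ℂ] fun z => z := by
    refine (isLittleO_const_id_cobounded 1).isBigO.sub ?_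
    simpa only [mul_right_comm c] using isBigO_const_mul_self (c * (q : ℂ) ^ m) _ _
  simpa [qpochC] using IsBigO.finsetProd (s := Finset.range k) fun m _ => hlin m

lemma isBigO_pbqJ (n : ℕ) : pbqJ q a b c d n =O[cobounded ℂ] fun z => z ^ n := by
  rw [funext (pbqJ_eq_sum n)]
  refine IsBigO.fun_sum fun k hk => ((isBigO_qpochC_mul k).trans ?_).const_mul_left _
  exact isBigO_pow_pow_cobounded_of_le (Finset.mem_range_succ_iff.1 hk)

lemma summable_reducedWeight_mul_pbqJ (hq0 : 0 < q) (hq1 : q < 1) {n : ℕ}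
    (hn : ‖a * b‖ < q ^ n * ‖c * d‖) {z : ℂ} (hz : z ≠ 0) :
    Summable fun i : ℕ => reducedWeight q a b c d (z / q ^ i) * pbqJ q a b c d n (z / q ^ i) :=
  summable_of_isBigO_nat (summable_reducedWeight_mul_pow hq0 hq1 hn hz).norm <|
    ((isBigO_refl _ _).mul
      ((isBigO_pbqJ n).comp_tendsto (tendsto_div_pow_cobounded hq0 hq1 hz))).norm_right

lemma isQAntideriv_reducedWeight_mul_pbqJ (hq0 : 0 < q) (hq1 : q < 1) (ha : a ≠ 0) (hb : b ≠ 0)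
    (hc : c ≠ 0) (hcΛ : ∀ x ∈ Lambda q zm zp, c * x ≠ 1) (hdΛ : ∀ x ∈ Lambda q zm zp, d * x ≠ 1)
    {n : ℕ} (hca : ∀ k ≤ n, c * (q : ℂ) ^ k ≠ a) (hcb : ∀ k ≤ n, c * (q : ℂ) ^ k ≠ b) :
    IsQAntideriv q
      (fun x : ℝ => c * q / ((b - c) * (a - c)) *
        (reducedWeight q a b c d x * pbqJ q a b c d n x))
      (fun x : ℝ => reducedWeight q a b (c / q) (d / q) x * pbqJ q a b (c / q) (d / q) (n + 1) x)
      (Lambda q zm zp) := fun x hx => by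
  have hxq : x / q ∈ Lambda q zm zp := by simpa using div_pow_mem_Lambda hq0 hx 1
  have hcx : c * ((x : ℂ) / q) ≠ 1 := by exact_mod_cast hcΛ _ hxq
  have hdx : d * ((x : ℂ) / q) ≠ 1 := by exact_mod_cast hdΛ _ hxq
  simp only [Complex.real_smul, Complex.ofReal_div]
  rw [reducedWeight_div hq0 hq1, reducedWeight_eq_mul hq0 hq1 hcx hdx]
  linear_combination reducedWeight q a b (c / q) (d / q) x *
    pbqJ_backward_shift (d := d) hq0 hq1 ha hb hc hca hcb x

theorem backward_shift_summation_general (hq0 : 0 < q) (hq1 : q < 1) (hzm : zm < 0) (hzp : 0 < zp)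
    (ha : a ≠ 0) (hb : b ≠ 0) (hcΛ : ∀ x ∈ Lambda q zm zp, c * x ≠ 1)
    (hdΛ : ∀ x ∈ Lambda q zm zp, d * x ≠ 1) {n : ℕ} (hca : ∀ k ≤ n, c * (q : ℂ) ^ k ≠ a)
    (hcb : ∀ k ≤ n, c * (q : ℂ) ^ k ≠ b) (hn : ‖a * b‖ < q ^ n * ‖c * d‖) {y : ℝ}
    (hy : y ∈ Lambda q zm zp) :
    HasSum (fun x : {x : ↥(Lambda q zm zp) // triLT (x : ℝ) y} =>
        weightC q a b (c / q) (d / q) x * pbqJ q a b (c / q) (d / q) (n + 1) (x : ℝ))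
      (c * q / ((b - c) * (a - c)) * (weightC q a b c d y * pbqJ q a b c d n y / (|y| : ℝ))) := by
  have hc : c ≠ 0 := by
    rintro rfl
    rw [zero_mul, norm_zero, mul_zero] at hn
    exact hn.not_ge (norm_nonneg _)
  have hy0 : ((|y| : ℝ) : ℂ) ≠ 0 := by
    exact_mod_cast abs_ne_zero.2 (ne_zero_of_mem_Lambda hq0 hzm hzp hy)
  have hcont (c' d' : ℂ) (m : ℕ) : ContinuousAt
      (fun x : ℝ => reducedWeight q a b c' d' x * pbqJ q a b c' d' m x) 0 :=
    ((continuousAt_reducedWeight_zero hq0 hq1).mul (continuous_pbqJ m).continuousAt).comp_of_eq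
      Complex.continuous_ofReal.continuousAt Complex.ofReal_zero
  have hanti := isQAntideriv_reducedWeight_mul_pbqJ hq0 hq1 ha hb hc hcΛ hdΛ hca hcb
  have hsum := hanti.hasSum_triLT hq0 hq1 hzm hzp ((hcont c d n).const_mul _)
    (hcont (c / q) (d / q) (n + 1)) (fun x _ hx0 => by
      simpa using (summable_reducedWeight_mul_pbqJ hq0 hq1 hn
        (Complex.ofReal_ne_zero.2 hx0.ne)).mul_left _) hy
  simp only [weightC_eq_abs_mul, mul_assoc, mul_div_cancel_left₀ _ hy0]
  simpa only [Complex.real_smul] using hsum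

end Summation

/-- Lemma 4.6: with w(x) = w(x;a,b,c,d), Pₙ(x) = Pₙ(x;a,b,c,d),
w*(x) = w(x;a,b,cq⁻¹,dq⁻¹), P*_{n+1}(x) = P_{n+1}(x;a,b,cq⁻¹,dq⁻¹), for every y ∈ Λ,
Σ_{x ∈ Λ, x ◁ y} w*(x) P*_{n+1}(x) = cq/((b−c)(a−c)) · w(y)Pₙ(y)/|y|,
the series converging absolutely. -/
theorem backward_shift_summation (q zm zp : ℝ) (hq0 : 0 < q) (hq1 : q < 1) (hzm : zm < 0)
    (hzp : 0 < zp) (a b c d : ℂ)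
    (hab : AdmissiblePair q zm zp a b) (hcd : AdmissiblePair q zm zp c d)
    (hac : a ≠ c) (hbc : b ≠ c) (n : ℕ)
    (hn : (q : ℝ) ^ (-(2 * n : ℤ)) < (c * d * (q : ℂ) / (a * b)).re)
    (y : ℝ) (hy : y ∈ Lambda q zm zp) :
    Summable (fun x : {x : ↥(Lambda q zm zp) // triLT (x : ℝ) y} =>
      weightC q a b (c / q) (d / q) ((x : ℝ)) *
        pbqJ q a b (c / q) (d / q) (n + 1) (((x : ℝ) : ℂ))) ∧
    ∑' x : {x : ↥(Lambda q zm zp) // triLT (x : ℝ) y},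
        weightC q a b (c / q) (d / q) ((x : ℝ)) *
          pbqJ q a b (c / q) (d / q) (n + 1) (((x : ℝ) : ℂ))
      = c * (q : ℂ) / ((b - c) * (a - c)) *
          (weightC q a b c d y * pbqJ q a b c d n ((y : ℂ)) / (|y| : ℝ)) := by
  have hsum := backward_shift_summation_general hq0 hq1 hzm hzp hab.1 hab.2.1
    (fun _ => hcd.mul_ne_one) (fun _ => hcd.symm.mul_ne_one)
    (fun _ => hab.symm.mul_pow_ne_of_lt_re hq0 hq1 hzm hzp hcd (by rwa [mul_comm b a]))
    (fun _ => hab.mul_pow_ne_of_lt_re hq0 hq1 hzm hzp hcd hn)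
    (norm_mul_lt_of_lt_re hq0 hq1 hn) hy
  exact ⟨hsum.summable, hsum.tsum_eq⟩

end
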